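/- arXiv:1902.00747 — 2 statements merged into one kernel-verified Lean document; each statement's English description precedes it below -/
import Mathlib

section
/- Let G be the complete multipartite graph K_{r_1·n_1,…,r_s·n_s} of order n = ∑_{i=1}^s r_i n_i with exactly r_i parts of size n_i (the n_i pairwise distinct), and k = ∑_{i=1}^s r_i. Then S_G(λ) = (λ+1)^{n−k} ∏_{i=1}^{s} (λ+1−2n_i)^{r_i−1} ( λ^s + ∑_{m=1}^{s} ∑_{i=0}^{m} (−1)^{i−1} 2^{i−1} C(s−i, m−i) ( ∑_{l=1}^{s} r_l σ_{l,i} − 2σ_i ) λ^{s−m} ), where σ_0 = 1, σ_{l,0} = 0, σ_{l,1} = n_l, σ_i = ∑_{1 ≤ j_1 < ⋯ < j_i ≤ s} n_{j_1} ⋯ n_{j_i}, and σ_{l,i} = ∑ n_l n_{j_1} ⋯ n_{j_{i−1}} where the sum runs over 1 ≤ j_1 < ⋯ < j_{i−1} ≤ s with all j_t ≠ l, for l, i = 1,…,s. -/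
open Polynomial Matrix Finset SimpleGraph

/- The Seidel matrix `S(G) = J - I - 2A(G)` of a simple graph `G`. -/
open scoped Classical in
noncomputable def seidelMatrix {V : Type*} [Fintype V] [DecidableEq V]
    (G : SimpleGraph V) : Matrix V V ℝ :=
  (Matrix.of fun _ _ => (1 : ℝ)) - 1 - 2 • G.adjMatrix ℝ

/-- `σ_i`, the `i`-th elementary symmetric polynomial in `n 0, …, n (s-1)`
(`σ_0 = 1`). -/
noncomputable def esym {s : ℕ} (n : Fin s → ℕ) (i : ℕ) : ℝ :=
  ∑ t ∈ Finset.powersetCard i (Finset.univ : Finset (Fin s)), ∏ j ∈ t, (n j : ℝ)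

/-- `σ_{l,i} = ∑ n_l n_{j_1} ⋯ n_{j_{i-1}}`, the sum running over
`1 ≤ j_1 < ⋯ < j_{i-1} ≤ s` with all `j_t ≠ l`; and `σ_{l,0} = 0`. -/
noncomputable def esymAt {s : ℕ} (n : Fin s → ℕ) (l : Fin s) (i : ℕ) : ℝ :=
  if i = 0 then 0
  else (n l : ℝ) *
    ∑ t ∈ Finset.powersetCard (i - 1) (Finset.univ.erase l), ∏ j ∈ t, (n j : ℝ)

/-!
Write `p u` for the part containing the vertex `u`. The `(u, v)` entry of `S + I` is
the `(p u, p v)` entry of `2I - J`, a matrix indexed by the parts. So `S + I` factors through the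
parts, and since `AB` and `BA` have the same characteristic polynomial up to a power of `X`, it may
be replaced by `D(2I - J)`, where `D` is the diagonal matrix of part sizes. This is a rank-one
perturbation of `2D`, so its characteristic polynomial is explicit. Expanding it in the elementary
symmetric functions of the sizes and substituting `X + 1` for `X`, which undoes the shift by `I`
and brings in the binomial coefficients, gives the formula.
-/

section RankOne
variable {R K : Type*} [CommRing R] [Fintype K] [DecidableEq K]

theorem det_smul_one_add_vecMulVec (c : R) (u v : K → R) :
    (c • 1 + vecMulVec u v).det =
      c ^ Fintype.card K + v ⬝ᵥ u * c ^ (Fintype.card K - 1) := by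
  have h := congrArg (eval c) (charpoly_vecMulVec (-u) v)
  rw [eval_charpoly, neg_vecMulVec, sub_neg_eq_add, scalar_apply, ← smul_one_eq_diagonal] at h
  simpa [dotProduct_comm u v] using h

theorem det_add_vecMulVec_of_isRegular {A : Matrix K K R} (hA : IsRegular A.det)
    (u v : K → R) :
    (A + vecMulVec u v).det = A.det + v ⬝ᵥ A.adjugate *ᵥ u := by
  cases isEmpty_or_nonempty K
  · simp [dotProduct]
  -- Left multiplication by the adjugate replaces `A` by a scalar matrix.
  have hmul : A.adjugate * (A + vecMulVec u v) =
      A.det • 1 + vecMulVec (A.adjugate *ᵥ u) v := by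
    rw [Matrix.mul_add, adjugate_mul, mul_vecMulVec]
  refine (hA.pow (Fintype.card K - 1)).left ?_
  calc A.det ^ (Fintype.card K - 1) * (A + vecMulVec u v).det
      = (A.det • 1 + vecMulVec (A.adjugate *ᵥ u) v).det := by
        rw [← hmul, det_mul, det_adjugate]
    _ = A.det ^ (Fintype.card K - 1) * (A.det + v ⬝ᵥ A.adjugate *ᵥ u) := by
        rw [det_smul_one_add_vecMulVec, mul_add, pow_sub_one_mul Fintype.card_ne_zero,
          mul_comm (_ ⬝ᵥ _)]

theorem charpoly_sub_vecMulVec (A : Matrix K K R) (u v : K → R) :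
    (A - vecMulVec u v).charpoly =
      A.charpoly + (C ∘ v) ⬝ᵥ A.charmatrix.adjugate *ᵥ (C ∘ u) := by
  have hsub : (A - vecMulVec u v).charmatrix = A.charmatrix + vecMulVec (C ∘ u) (C ∘ v) := by
    ext1 i j
    simp [charmatrix, vecMulVec_apply, sub_add]
  rw [charpoly, hsub]
  exact det_add_vecMulVec_of_isRegular A.charpoly_monic.isRegular _ _

theorem charpoly_diagonal_sub_vecMulVec (d u v : K → R) :
    (diagonal d - vecMulVec u v).charpoly =
      ∏ p, (X - C (d p)) + ∑ p, C (u p * v p) * ∏ q ∈ univ.erase p, (X - C (d q)) := by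
  have hdiag : (diagonal d).charmatrix = diagonal fun p => X - C (d p) := by
    ext1 p q
    by_cases hpq : p = q <;> simp [charmatrix, hpq]
  rw [charpoly_sub_vecMulVec, charpoly_diagonal, hdiag, adjugate_diagonal]
  congr 1
  refine sum_congr rfl fun p _ => ?_
  rw [mulVec_diagonal, C_mul, Function.comp_apply, Function.comp_apply]
  ring

theorem X_pow_card_mul_charpoly_submatrix {V : Type*} [Fintype V] [DecidableEq V]
    (M : Matrix K K R) (f : V → K) :
    X ^ Fintype.card K * (M.submatrix f f).charpoly =
      X ^ Fintype.card V * (diagonal (fun p => (#{v | f v = p} : R)) * M).charpoly := by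
  have hfactor : M.submatrix f f = M.submatrix f id * (1 : Matrix K K R).submatrix id f := by
    rw [← submatrix_mul _ _ _ _ _ Function.bijective_id, Matrix.mul_one]
  have hdiag : (1 : Matrix K K R).submatrix id f * M.submatrix f id =
      diagonal (fun p => (#{v | f v = p} : R)) * M := by
    ext p q
    rw [diagonal_mul, Matrix.mul_apply]
    simp only [submatrix_apply, id_eq, Matrix.one_apply, ite_mul,
      one_mul, zero_mul, ← sum_filter, @eq_comm _ p]
    rw [sum_congr rfl fun v hv => by rw [(mem_filter.1 hv).2], sum_const, nsmul_eq_mul]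
  rw [hfactor, charpoly_mul_comm', hdiag]

end RankOne

open scoped Classical in
theorem seidelMatrix_apply {V : Type*} [Fintype V] [DecidableEq V] (G : SimpleGraph V) (u v : V) :
    seidelMatrix G u v = (if u = v then 0 else 1) - if G.Adj u v then 2 else 0 := by
  by_cases huv : u = v <;> simp [seidelMatrix, huv, -nsmul_eq_mul]

theorem seidelMatrix_completeMultipartiteGraph {K : Type*} [Fintype K] [DecidableEq K]
    (V : K → Type*) [∀ p, Fintype (V p)] [∀ p, DecidableEq (V p)] :
    seidelMatrix (completeMultipartiteGraph V) =
      (diagonal 2 - vecMulVec 1 1 : Matrix K K ℝ).submatrix Sigma.fst Sigma.fst - 1 := by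
  ext u v
  rw [seidelMatrix_apply]
  by_cases hpart : u.1 = v.1
  · by_cases huv : u = v <;> norm_num [huv, hpart]
  · have hne : u ≠ v := fun h => hpart (congrArg Sigma.fst h)
    norm_num [hpart, hne]

theorem X_add_one_pow_card_mul_charpoly_seidelMatrix {K : Type*} [Fintype K] [DecidableEq K]
    (V : K → Type*) [∀ p, Fintype (V p)] [∀ p, DecidableEq (V p)] :
    (X + 1) ^ Fintype.card K * (seidelMatrix (completeMultipartiteGraph V)).charpoly =
      (X + 1) ^ (∑ p, Fintype.card (V p)) *
        (∏ p, (X + 1 - 2 * (Fintype.card (V p) : ℝ[X])) +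
          ∑ p, (Fintype.card (V p) : ℝ[X]) *
            ∏ q ∈ univ.erase p, (X + 1 - 2 * (Fintype.card (V q) : ℝ[X]))) := by
  let w : K → ℝ := fun p => Fintype.card (V p)
  let M : Matrix K K ℝ := diagonal 2 - vecMulVec 1 1
  have hfiber (p : K) : #{v : (p : K) × V p | v.1 = p} = Fintype.card (V p) := by
    rw [← Fintype.card_subtype]
    exact Fintype.card_congr (Equiv.sigmaSubtype p)
  have hquot : diagonal w * M = diagonal (2 * w) - vecMulVec w 1 := by
    ext p q
    by_cases hpq : p = q <;> simp [M, hpq, mul_sub, mul_comm]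
  have hshift : (seidelMatrix (completeMultipartiteGraph V)).charpoly =
      (M.submatrix (Sigma.fst : ((p : K) × V p) → K) Sigma.fst).charpoly.comp (X + 1) := by
    rw [seidelMatrix_completeMultipartiteGraph, ← C_1, ← charpoly_sub_scalar, map_one]
  have hblowup := X_pow_card_mul_charpoly_submatrix M (Sigma.fst : ((p : K) × V p) → K)
  simp only [hfiber] at hblowup
  rw [hquot, charpoly_diagonal_sub_vecMulVec] at hblowup
  have hcomp := congrArg (comp · (X + 1)) hblowup
  rw [hshift]
  simpa [w, Polynomial.prod_comp, map_ofNat C] using hcomp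

theorem prod_erase_fst_eq_prod_pow_mul {ι M : Type*} [Fintype ι] [DecidableEq ι] [CommMonoid M]
    (a : ι → M) {r : ι → ℕ} (hr : ∀ i, 1 ≤ r i) (p : (i : ι) × Fin (r i)) :
    ∏ q ∈ univ.erase p, a q.1 = (∏ i, a i ^ (r i - 1)) * ∏ i ∈ univ.erase p.1, a i := by
  obtain ⟨l, j⟩ := p
  let fiber : (i : ι) → Finset (Fin (r i)) := Function.update (fun _ => univ) l (univ.erase j)
  have herase : univ.erase ⟨l, j⟩ = univ.sigma fiber := by
    ext ⟨i, k⟩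
    by_cases hi : i = l
    · subst hi
      simp [fiber]
    · simp [fiber, hi]
  have hne : ∀ i ∈ univ.erase l, a i ^ #(fiber i) = a i ^ (r i - 1) * a i := fun i hi => by
    simp [fiber, Function.update_of_ne (ne_of_mem_erase hi),
      pow_sub_one_mul (Nat.one_le_iff_ne_zero.1 (hr i))]
  have hself : #(fiber l) = r l - 1 := by simp [fiber]
  rw [herase, prod_sigma]
  simp only [prod_const]
  rw [← mul_prod_erase _ _ (mem_univ l), prod_congr rfl hne, hself, prod_mul_distrib, ← mul_assoc,
    mul_prod_erase _ (fun i => a i ^ (r i - 1)) (mem_univ l)]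

theorem prod_fst_eq_prod_pow_mul {ι M : Type*} [Fintype ι] [CommMonoid M]
    (a : ι → M) {r : ι → ℕ} (hr : ∀ i, 1 ≤ r i) :
    ∏ q : (i : ι) × Fin (r i), a q.1 = (∏ i, a i ^ (r i - 1)) * ∏ i, a i := by
  simp [Fintype.prod_sigma, ← prod_mul_distrib, pow_sub_one_mul (Nat.one_le_iff_ne_zero.1 (hr _))]

theorem X_add_one_pow_mul_charpoly_seidelMatrix_sigma {ι : Type*} [Fintype ι] [DecidableEq ι]
    (r n : ι → ℕ) (hr : ∀ i, 1 ≤ r i) :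
    (X + 1) ^ (∑ i, r i) * (seidelMatrix (completeMultipartiteGraph
        fun p : (i : ι) × Fin (r i) => Fin (n p.1))).charpoly =
      (X + 1) ^ (∑ i, r i * n i) * ((∏ i, (X + 1 - 2 * (n i : ℝ[X])) ^ (r i - 1)) *
        (∏ i, (X + 1 - 2 * (n i : ℝ[X])) +
          ∑ l, (r l : ℝ[X]) * (n l * ∏ i ∈ univ.erase l, (X + 1 - 2 * (n i : ℝ[X]))))) := by
  have h := X_add_one_pow_card_mul_charpoly_seidelMatrix
    fun p : (i : ι) × Fin (r i) => Fin (n p.1)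
  simp only [Fintype.card_sigma, Fintype.card_fin, Fintype.sum_sigma, sum_const, card_univ,
    smul_eq_mul] at h
  rw [h, prod_fst_eq_prod_pow_mul (fun i => X + 1 - 2 * (n i : ℝ[X])) hr]
  simp only [prod_erase_fst_eq_prod_pow_mul (fun i => X + 1 - 2 * (n i : ℝ[X])) hr, sum_const,
    card_univ, Fintype.card_fin, nsmul_eq_mul]
  rw [mul_add (∏ i, _ ^ _), mul_sum]
  congr 3
  exact funext fun l => by ring

section Expansion

variable {R A : Type*} [CommSemiring R] [CommSemiring A] [Algebra R A]

theorem prod_add_algebraMap_mul_eq_sum {ι : Type*} (S : Finset ι) (a : ι → R) (c : R) (y : A) :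
    ∏ j ∈ S, (y + algebraMap R A (c * a j)) =
      ∑ i ∈ range (#S + 1),
        (c ^ i * ∑ t ∈ powersetCard i S, ∏ j ∈ t, a j) • y ^ (#S - i) := by
  have hscale (i : ℕ) : ∑ t ∈ powersetCard i S, ∏ j ∈ t, c * a j =
      c ^ i * ∑ t ∈ powersetCard i S, ∏ j ∈ t, a j := by
    rw [mul_sum]
    refine sum_congr rfl fun t ht => ?_
    rw [prod_mul_distrib, prod_const, (mem_powersetCard.1 ht).2]
  have hvieta := congrArg (aeval y)
    (Multiset.prod_X_add_C_eq_sum_esymm (S.val.map fun j => c * a j))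
  simpa [esymm_map_val, hscale, map_multiset_prod, map_mul (aeval y), aeval_C,
    ← Algebra.smul_def, -map_mul] using hvieta

theorem natCast_mul_smul (m : ℕ) (c : R) (x : A) : (m : A) * c • x = (m * c : R) • x := by
  rw [mul_smul, Nat.cast_smul_eq_nsmul, nsmul_eq_mul]

theorem add_one_pow_sub_eq_sum_Icc (y : A) {i s : ℕ} (his : i ≤ s) :
    (y + 1) ^ (s - i) = ∑ m ∈ Icc i s, (s - i).choose (m - i) * y ^ (s - m) := by
  rw [add_comm y 1, add_pow, ← Ico_add_one_right_eq_Icc, sum_Ico_eq_sum_range, Nat.sub_add_comm his]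
  refine sum_congr rfl fun k _ => ?_
  rw [one_pow, one_mul, Nat.add_sub_cancel_left, Nat.sub_sub, mul_comm]

theorem sum_smul_add_one_pow_sub (s : ℕ) (c : ℕ → R) (y : A) :
    ∑ i ∈ range (s + 1), c i • (y + 1) ^ (s - i) =
      ∑ m ∈ range (s + 1),
        (∑ i ∈ range (m + 1), c i * ((s - i).choose (m - i) : R)) • y ^ (s - m) := by
  calc ∑ i ∈ range (s + 1), c i • (y + 1) ^ (s - i)
      = ∑ i ∈ range (s + 1), ∑ m ∈ Icc i s,
          (c i * ((s - i).choose (m - i) : R)) • y ^ (s - m) :=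
        sum_congr rfl fun i hi => by
          simp only [add_one_pow_sub_eq_sum_Icc y (mem_range_succ_iff.1 hi), smul_sum, mul_smul,
            Nat.cast_smul_eq_nsmul, nsmul_eq_mul]
    _ = ∑ m ∈ range (s + 1),
          (∑ i ∈ range (m + 1), c i * ((s - i).choose (m - i) : R)) • y ^ (s - m) := by
        simp only [sum_smul]
        refine sum_comm' fun i m => ?_
        simp only [mem_range, mem_Icc]
        omega

end Expansion

section Esym

variable {A : Type*} [CommRing A] [Algebra ℝ A] {s : ℕ} (n : Fin s → ℕ)

theorem prod_sub_two_mul_eq_sum_esym (y : A) :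
    ∏ j, (y - 2 * (n j : A)) = ∑ i ∈ range (s + 1), ((-2) ^ i * esym n i) • y ^ (s - i) := by
  simpa [sub_eq_add_neg, map_ofNat (algebraMap ℝ A), esym] using
    prod_add_algebraMap_mul_eq_sum univ (fun j => (n j : ℝ)) (-2) y

theorem esymAt_zero (l : Fin s) : esymAt n l 0 = 0 := if_pos rfl

theorem esymAt_succ (l : Fin s) (i : ℕ) :
    esymAt n l (i + 1) = n l * ∑ t ∈ powersetCard i (univ.erase l), ∏ j ∈ t, (n j : ℝ) :=
  if_neg i.succ_ne_zero

theorem mul_prod_erase_sub_two_mul_eq_sum_esymAt (l : Fin s) (y : A) :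
    (n l : A) * ∏ j ∈ univ.erase l, (y - 2 * (n j : A)) =
      ∑ i ∈ range (s + 1), ((-2) ^ ((i : ℤ) - 1) * esymAt n l i) • y ^ (s - i) := by
  have hcard : #(univ.erase l) = s - 1 := by simp
  have hprod : ∏ j ∈ univ.erase l, (y - 2 * (n j : A)) = ∑ i ∈ range s,
      ((-2) ^ i * ∑ t ∈ powersetCard i (univ.erase l), ∏ j ∈ t, (n j : ℝ)) • y ^ (s - 1 - i) := by
    simpa [sub_eq_add_neg, map_ofNat (algebraMap ℝ A), hcard, Nat.sub_add_cancel l.pos] using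
      prod_add_algebraMap_mul_eq_sum (univ.erase l) (fun j => (n j : ℝ)) (-2) y
  rw [hprod, mul_sum, sum_range_succ', esymAt_zero, mul_zero, zero_smul, add_zero]
  refine sum_congr rfl fun i _ => ?_
  rw [esymAt_succ, Nat.cast_succ, add_sub_cancel_right, zpow_natCast, mul_left_comm,
    natCast_mul_smul, Nat.sub_sub, Nat.add_comm 1 i]

theorem prod_add_sum_mul_prod_erase_eq_sum_esymAt_sub_esym (r : Fin s → ℕ) (y : A) :
    ∏ j, (y - 2 * (n j : A)) +
        ∑ l, (r l : A) * (n l * ∏ j ∈ univ.erase l, (y - 2 * (n j : A))) =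
      ∑ i ∈ range (s + 1), ((-2 : ℝ) ^ ((i : ℤ) - 1) *
        ((∑ l, (r l : ℝ) * esymAt n l i) - 2 * esym n i)) • y ^ (s - i) := by
  have hpow (i : ℕ) : (-2 : ℝ) ^ i = (-2) ^ ((i : ℤ) - 1) * (-2) := by
    rw [← zpow_add_one₀ (by norm_num), sub_add_cancel, zpow_natCast]
  simp only [mul_prod_erase_sub_two_mul_eq_sum_esymAt, prod_sub_two_mul_eq_sum_esym, mul_sum]
  rw [sum_comm, ← sum_add_distrib]
  refine sum_congr rfl fun i _ => ?_
  simp only [natCast_mul_smul, ← sum_smul, ← add_smul]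
  have hsum : ∑ l, (r l : ℝ) * ((-2) ^ ((i : ℤ) - 1) * esymAt n l i) =
      (-2) ^ ((i : ℤ) - 1) * ∑ l, (r l : ℝ) * esymAt n l i := by
    simp only [mul_sum, mul_left_comm]
  rw [hsum, hpow]
  congr 1
  ring

theorem prod_add_sum_mul_prod_erase_eq_X_pow_add_sum (r : Fin s → ℕ) :
    ∏ j, (X + 1 - 2 * (n j : ℝ[X])) +
        ∑ l, (r l : ℝ[X]) * (n l * ∏ j ∈ univ.erase l, (X + 1 - 2 * (n j : ℝ[X]))) =
      X ^ s + ∑ m ∈ Icc 1 s,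
        C (∑ i ∈ range (m + 1),
            (-1 : ℝ) ^ ((i : ℤ) - 1) * (2 : ℝ) ^ ((i : ℤ) - 1) * ((s - i).choose (m - i) : ℝ) *
              ((∑ l, (r l : ℝ) * esymAt n l i) - 2 * esym n i)) *
          X ^ (s - m) := by
  rw [prod_add_sum_mul_prod_erase_eq_sum_esymAt_sub_esym, sum_smul_add_one_pow_sub,
    sum_range_eq_add_Ico _ (by omega)]
  simp only [← mul_zpow, neg_one_mul, smul_eq_C_mul, mul_right_comm, Ico_add_one_right_eq_Icc]
  simp [esymAt_zero, esym]

end Esym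

theorem seidel_charpoly_coeffs_mult_general (s : ℕ) (r n : Fin s → ℕ)
    (hr : ∀ i, 1 ≤ r i) (hn : ∀ i, 1 ≤ n i) :
    (seidelMatrix (completeMultipartiteGraph
        fun p : (i : Fin s) × Fin (r i) => Fin (n p.1))).charpoly =
      (X + 1) ^ ((∑ i, r i * n i) - ∑ i, r i) *
        (∏ i, (X + 1 - 2 * (n i : ℝ[X])) ^ (r i - 1)) *
        (X ^ s +
          ∑ m ∈ Finset.Icc 1 s,
            C (∑ i ∈ Finset.range (m + 1),
                (-1 : ℝ) ^ ((i : ℤ) - 1) * (2 : ℝ) ^ ((i : ℤ) - 1) *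
                  ((s - i).choose (m - i) : ℝ) *
                  ((∑ l, (r l : ℝ) * esymAt n l i) - 2 * esym n i)) *
              X ^ (s - m)) := by
  have hle : ∑ i, r i ≤ ∑ i, r i * n i :=
    sum_le_sum fun i _ => Nat.le_mul_of_pos_right _ (hn i)
  have hne : (X + 1 : ℝ[X]) ^ (∑ i, r i) ≠ 0 := pow_ne_zero _ (X_add_C_ne_zero 1)
  have hpow : (X + 1 : ℝ[X]) ^ (∑ i, r i * n i) =
      (X + 1) ^ (∑ i, r i) * (X + 1) ^ (∑ i, r i * n i - ∑ i, r i) := by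
    rw [← pow_add, Nat.add_sub_cancel' hle]
  refine mul_left_cancel₀ hne ?_
  rw [X_add_one_pow_mul_charpoly_seidelMatrix_sigma r n hr,
    prod_add_sum_mul_prod_erase_eq_X_pow_add_sum, hpow]
  simp only [mul_assoc]

/-- **Theorem (coefficients of the Seidel characteristic polynomial of
`K_{r_1·n_1,…,r_s·n_s}`).** For the complete multipartite graph with exactly `r i`
parts of size `n i` (`n i` pairwise distinct), order `N = ∑ i, r i * n i` and
`k = ∑ i, r i` parts,
`S_G(λ) = (λ+1)^{N-k} ∏_i (λ+1-2n_i)^{r_i-1} (λ^s +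
  ∑_{m=1}^{s} ∑_{i=0}^{m} (-1)^{i-1} 2^{i-1} C(s-i,m-i) (∑_l r_l σ_{l,i} - 2σ_i) λ^{s-m})`. -/
theorem seidel_charpoly_coeffs_mult (s : ℕ) (r n : Fin s → ℕ)
    (hr : ∀ i, 1 ≤ r i) (hn : ∀ i, 1 ≤ n i) (hdist : Function.Injective n) :
    (seidelMatrix (completeMultipartiteGraph
        fun p : (i : Fin s) × Fin (r i) => Fin (n p.1))).charpoly =
      (X + 1) ^ ((∑ i, r i * n i) - ∑ i, r i) *
        (∏ i, (X + 1 - 2 * (n i : ℝ[X])) ^ (r i - 1)) *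
        (X ^ s +
          ∑ m ∈ Finset.Icc 1 s,
            C (∑ i ∈ Finset.range (m + 1),
                (-1 : ℝ) ^ ((i : ℤ) - 1) * (2 : ℝ) ^ ((i : ℤ) - 1) *
                  ((s - i).choose (m - i) : ℝ) *
                  ((∑ l, (r l : ℝ) * esymAt n l i) - 2 * esym n i)) *
              X ^ (s - m)) :=
  seidel_charpoly_coeffs_mult_general s r n hr hn
end

section
/- Let n_1 ≥ n_2 ≥ ⋯ ≥ n_{k−3} ≥ 2 with k ≥ 4. Then the complete k-partite graph K_{n_1,…,n_{k−3},2,2,1} (with two parts of size 2 and one part of size 1 appended) is S-determined: every graph with the same Seidel spectrum is switching equivalent to a graph isomorphic to K_{n_1,…,n_{k−3},2,2,1}. -/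
open Polynomial Matrix Finset SimpleGraph

/-- Two graphs on the same vertex set are switching equivalent iff their Seidel
matrices are conjugate by a diagonal `±1` matrix. -/
def SwitchingEquiv {V : Type*} [Fintype V] [DecidableEq V]
    (G H : SimpleGraph V) : Prop :=
  ∃ ε : V → ℝ, (∀ v, ε v = 1 ∨ ε v = -1) ∧
    seidelMatrix H = Matrix.diagonal ε * seidelMatrix G * Matrix.diagonal ε

/-- A graph `G` is determined, up to switching, by its Seidel spectrum
(`S`-determined) if every graph with the same Seidel spectrum is switching
equivalent to a graph isomorphic to `G`. -/
def SDetermined {V : Type} [Fintype V] [DecidableEq V] (G : SimpleGraph V) : Prop :=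
  ∀ (W : Type) [Fintype W] [DecidableEq W] (H : SimpleGraph W),
    (seidelMatrix H).charpoly = (seidelMatrix G).charpoly →
    ∃ H' : SimpleGraph W, SwitchingEquiv H H' ∧ Nonempty (H' ≃g G)

/-!
The matrix `S(G) + I` has entries `±1`, and for a complete multipartite graph `G` its quadratic form
has at most one negative square. This is a property of the spectrum, so it holds for every graph `H`
with the same Seidel spectrum. Switch `H` so that some vertex becomes isolated. The reverse
Cauchy–Schwarz inequality then forbids edges `ab` and `cd` with `c` adjacent to neither `a` nor `b`,
so that non-adjacency is transitive on the non-isolated vertices, and switching the set of all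
isolated vertices produces a complete multipartite graph.

It remains to recover part sizes `n i` from the spectrum. Let `P = ∏ i, (1 - 2 (n i) X)`. The
reversed characteristic polynomial of `S + I` is `P - X P' / 2`, so the spectrum determines `P` up
to a term `c X ^ 2`. If sizes `1` and `2` occur among the `n i`, then `P` vanishes at `1 / 2` and
`1 / 4`. For other sizes `q j` with the same spectrum this gives `∏ j, (1 - q j) = c / 4` and
`∏ j, (1 - q j / 2) = c / 16`. If `c ≠ 0`, then all `q j` are at least `3` and each ratio
`(1 - q j / 2) / (1 - q j)` lies in `[1 / 4, 1 / 2)`; their product is `1 / 4`, so there is a single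
`q j`, equal to `3`. Hence `c = 0` unless the graph has only three vertices.
-/

/-- A bilinear form with at most one negative square, encoded as nonnegativity on the kernel of a
linear functional (which may be zero). It is the property of the form `S(G) + I` that survives
passing to a graph with the same Seidel spectrum. -/
def HasAtMostOneNegSquare {R M : Type*} [CommRing R] [LinearOrder R] [AddCommGroup M] [Module R M]
    (B : LinearMap.BilinForm R M) : Prop :=
  ∃ l : M →ₗ[R] R, ∀ x, l x = 0 → 0 ≤ B x x

section BilinearForms

variable {R M N : Type*} [CommRing R] [LinearOrder R] [AddCommGroup M] [Module R M]
  [AddCommGroup N] [Module R N] {B : LinearMap.BilinForm R M}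

theorem HasAtMostOneNegSquare.comp (hB : HasAtMostOneNegSquare B) (f : N →ₗ[R] M) :
    HasAtMostOneNegSquare (B.comp f f) := by
  obtain ⟨l, hl⟩ := hB
  exact ⟨l ∘ₗ f, fun x hx => hl (f x) hx⟩

variable [IsStrictOrderedRing R]

theorem HasAtMostOneNegSquare.mul_le_sq (hB : HasAtMostOneNegSquare B) (hsymm : B.IsSymm)
    {x : M} (hx : B x x < 0) (y : M) : B x x * B y y ≤ B x y ^ 2 := by
  obtain ⟨l, hl⟩ := hB
  have hlx : l x ≠ 0 := fun h => (hl x h).not_gt hx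
  have hz : 0 ≤ B (l x • y - l y • x) (l x • y - l y • x) := hl _ (by simp [mul_comm])
  have hexpand : B (l x • y - l y • x) (l x • y - l y • x) =
      l x ^ 2 * B y y - 2 * (l x * l y) * B x y + l y ^ 2 * B x x := by
    simp only [map_sub, map_smul, LinearMap.sub_apply, LinearMap.smul_apply, smul_eq_mul,
      hsymm.eq y x]
    ring
  have hsq : 0 ≤ l x ^ 2 * (B x y ^ 2 - B x x * B y y) := by
    have hmul := mul_nonpos_of_nonpos_of_nonneg hx.le (hexpand ▸ hz)
    linear_combination sq_nonneg (l y * B x x - l x * B x y) + hmul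
  exact sub_nonneg.1 (nonneg_of_mul_nonneg_right hsq (by positivity))

/-- The Gram relations of an edge `ab` avoiding the neighbourhood of `o`: two unit vectors `a`, `b`
with `B a b = -1`, both of product `1` with `o`. -/
structure IsNegativePair (B : LinearMap.BilinForm R M) (o a b : M) : Prop where
  left_self : B a a = 1
  right_self : B b b = 1
  base_left : B o a = 1
  base_right : B o b = 1
  left_right : B a b = -1

-- Reverse Cauchy–Schwarz for `a + b - 2o` and `c + d - 2o`, both of square `-4`.
theorem IsNegativePair.sixteen_le_sq (hB : HasAtMostOneNegSquare B) (hsymm : B.IsSymm)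
    {o a b c d : M} (ho : B o o = 1) (hab : IsNegativePair B o a b)
    (hcd : IsNegativePair B o c d) : 16 ≤ (B a c + B a d + B b c + B b d - 4) ^ 2 := by
  have square {a b : M} (h : IsNegativePair B o a b) :
      B (a + b - (2 : R) • o) (a + b - (2 : R) • o) = -4 := by
    simp only [map_sub, map_add, map_smul, LinearMap.sub_apply, LinearMap.add_apply,
      LinearMap.smul_apply, smul_eq_mul, hsymm.eq a o, hsymm.eq b o, hsymm.eq b a, ho,
      h.left_self, h.right_self, h.base_left, h.base_right, h.left_right]
    ring
  have product : B (a + b - (2 : R) • o) (c + d - (2 : R) • o) =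
      B a c + B a d + B b c + B b d - 4 := by
    simp only [map_sub, map_add, map_smul, LinearMap.sub_apply, LinearMap.add_apply,
      LinearMap.smul_apply, smul_eq_mul, hsymm.eq a o, hsymm.eq b o, ho,
      hab.base_left, hab.base_right, hcd.base_left, hcd.base_right]
    ring
  have := hB.mul_le_sq hsymm (by rw [square hab]; norm_num) (c + d - (2 : R) • o)
  rw [square hab, square hcd, product] at this
  linarith

theorem IsNegativePair.false_of_eq_one (hB : HasAtMostOneNegSquare B) (hsymm : B.IsSymm)
    {o a b c d : M} (ho : B o o = 1) (hab : IsNegativePair B o a b) (hcd : IsNegativePair B o c d)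
    (hac : B a c = 1) (hbc : B b c = 1) (had : B a d = 1 ∨ B a d = -1)
    (hbd : B b d = 1 ∨ B b d = -1) : False := by
  have hcross := hab.sixteen_le_sq hB hsymm ho hcd
  obtain ⟨had, hbd⟩ : B a d = -1 ∧ B b d = -1 := by
    rcases had with had | had <;> rcases hbd with hbd | hbd <;>
      first
      | exact ⟨had, hbd⟩
      | rw [hac, hbc, had, hbd] at hcross; norm_num at hcross
  -- Exchanging the roles of `o` and `c` and negating `d` leads back to the excluded signs.
  have hcab : IsNegativePair B c a b :=
    { hab with base_left := hsymm.eq a c ▸ hac, base_right := hsymm.eq b c ▸ hbc }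
  have hcod : IsNegativePair B c o (-d) :=
    { left_self := ho
      right_self := by simpa using hcd.right_self
      base_left := hsymm.eq c o ▸ hcd.base_left
      base_right := by simp [hcd.left_right]
      left_right := by simp [hcd.base_right] }
  have := hcab.sixteen_le_sq hB hsymm hcd.left_self hcod
  rw [map_neg, map_neg, had, hbd, hsymm.eq a o, hsymm.eq b o, hab.base_left, hab.base_right] at this
  norm_num at this

end BilinearForms

section Switching

variable {V W : Type*} [Fintype V] [DecidableEq V] [Fintype W] [DecidableEq W]

open scoped Classical in
theorem seidelMatrix_add_one_apply (G : SimpleGraph V) (a b : V) :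
    (seidelMatrix G + 1) a b = if G.Adj a b then -1 else 1 := by
  rw [seidelMatrix, sub_right_comm, sub_add_cancel, Matrix.sub_apply, of_apply, Matrix.smul_apply,
    adjMatrix_apply]
  split_ifs <;> norm_num

theorem isSymm_seidelMatrix_add_one (G : SimpleGraph V) : (seidelMatrix G + 1).IsSymm := by
  classical
  ext a b
  rw [transpose_apply, seidelMatrix_add_one_apply, seidelMatrix_add_one_apply]
  simp only [G.adj_comm]

theorem isHermitian_seidelMatrix_add_one (G : SimpleGraph V) : (seidelMatrix G + 1).IsHermitian :=
  (conjTranspose_eq_transpose_of_trivial _).trans (isSymm_seidelMatrix_add_one G)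

theorem charpoly_seidelMatrix_add_one (G : SimpleGraph V) :
    (seidelMatrix G + 1).charpoly = (seidelMatrix G).charpoly.comp (X - C 1) := by
  simpa [sub_eq_add_neg] using Matrix.charpoly_sub_scalar (seidelMatrix G) (-1)

theorem charpoly_seidelMatrix_eq_of_iso {G : SimpleGraph V} {H : SimpleGraph W} (e : G ≃g H) :
    (seidelMatrix G).charpoly = (seidelMatrix H).charpoly := by
  classical
  have hG : seidelMatrix G + 1 = (seidelMatrix H + 1).submatrix e e := by
    ext a b
    rw [submatrix_apply, seidelMatrix_add_one_apply, seidelMatrix_add_one_apply]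
    simp only [e.map_adj_iff]
  have hS : seidelMatrix G = (seidelMatrix H).submatrix e e := by
    rw [← add_left_inj 1, hG, submatrix_add, Pi.add_apply, Pi.add_apply,
      submatrix_one e e.injective]
  exact hS ▸ charpoly_reindex e.symm.toEquiv (seidelMatrix H)

/-- The bilinear form of `S(G) + I`. Unlike `S(G)`, this matrix has only entries `±1`, the entry at
`(a, b)` being `-1` exactly when `a` and `b` are adjacent. -/
noncomputable def seidelForm (G : SimpleGraph V) : LinearMap.BilinForm ℝ (V → ℝ) :=
  toBilin' (seidelMatrix G + 1)

theorem isSymm_seidelForm (G : SimpleGraph V) : (seidelForm G).IsSymm :=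
  isSymm_toBilin'_iff_isSymm.2 (isSymm_seidelMatrix_add_one G)

open scoped Classical in
theorem seidelForm_single (G : SimpleGraph V) (a b : V) :
    seidelForm G (Pi.single a 1) (Pi.single b 1) = if G.Adj a b then -1 else 1 := by
  rw [seidelForm, toBilin'_single, seidelMatrix_add_one_apply]

theorem diagonal_mul_self_of_signs {ε : V → ℝ} (hε : ∀ v, ε v = 1 ∨ ε v = -1) :
    diagonal ε * diagonal ε = 1 := by
  rw [diagonal_mul_diagonal, ← diagonal_one]
  congr 1
  funext v
  rcases hε v with h | h <;> simp [h]

theorem diagonal_mul_mul_diagonal_add_one {ε : V → ℝ} (hε : ∀ v, ε v = 1 ∨ ε v = -1)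
    (A : Matrix V V ℝ) :
    diagonal ε * A * diagonal ε + 1 = diagonal ε * (A + 1) * diagonal ε := by
  rw [Matrix.mul_add, Matrix.add_mul, Matrix.mul_one, diagonal_mul_self_of_signs hε]

theorem SwitchingEquiv.trans {G H K : SimpleGraph V} (hGH : SwitchingEquiv G H)
    (hHK : SwitchingEquiv H K) : SwitchingEquiv G K := by
  obtain ⟨ε, hε, hH⟩ := hGH
  obtain ⟨δ, hδ, hK⟩ := hHK
  refine ⟨fun v => ε v * δ v, fun v => ?_, ?_⟩
  · rcases hε v with h | h <;> rcases hδ v with h' | h' <;> simp [h, h']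
  · calc
      seidelMatrix K = diagonal δ * diagonal ε * seidelMatrix G * (diagonal ε * diagonal δ) := by
        rw [hK, hH]
        simp only [Matrix.mul_assoc]
      _ = diagonal (fun v => ε v * δ v) * seidelMatrix G * diagonal (fun v => ε v * δ v) := by
        rw [(commute_diagonal δ ε).eq, diagonal_mul_diagonal]

theorem SwitchingEquiv.charpoly_seidelMatrix_eq {G H : SimpleGraph V} (h : SwitchingEquiv G H) :
    (seidelMatrix H).charpoly = (seidelMatrix G).charpoly := by
  obtain ⟨ε, hε, hH⟩ := h
  rw [hH, Matrix.charpoly_mul_comm, ← Matrix.mul_assoc, diagonal_mul_self_of_signs hε,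
    Matrix.one_mul]

theorem SwitchingEquiv.hasAtMostOneNegSquare {G H : SimpleGraph V} (h : SwitchingEquiv G H)
    (hG : HasAtMostOneNegSquare (seidelForm G)) : HasAtMostOneNegSquare (seidelForm H) := by
  obtain ⟨ε, hε, hH⟩ := h
  have hform : seidelForm H =
      (seidelForm G).comp (diagonal ε).toLin' (diagonal ε).toLin' := by
    rw [seidelForm, seidelForm, toBilin'_comp, diagonal_transpose, hH,
      diagonal_mul_mul_diagonal_add_one hε]
  exact hform ▸ hG.comp _

/-- Seidel switching of `G` with respect to the vertex set `U`. -/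
def switch (G : SimpleGraph V) (U : Set V) : SimpleGraph V where
  Adj a b := Xor (G.Adj a b) (Xor (a ∈ U) (b ∈ U))
  symm := ⟨fun a b h => by rwa [G.adj_comm, xor_comm (b ∈ U)]⟩
  loopless := ⟨fun a h => by simp at h⟩

theorem switchingEquiv_switch (G : SimpleGraph V) (U : Set V) : SwitchingEquiv G (switch G U) := by
  classical
  let ε : V → ℝ := fun v => if v ∈ U then -1 else 1
  have hε (v : V) : ε v = 1 ∨ ε v = -1 := (ite_eq_or_eq _ _ _).symm
  refine ⟨ε, hε, ?_⟩
  rw [← add_left_inj 1, diagonal_mul_mul_diagonal_add_one hε]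
  ext a b
  rw [mul_diagonal, diagonal_mul, seidelMatrix_add_one_apply, seidelMatrix_add_one_apply]
  by_cases ha : a ∈ U <;> by_cases hb : b ∈ U <;> by_cases hab : G.Adj a b <;>
    simp [switch, ε, ha, hb, hab]

theorem adj_or_adj_of_isIsolated {G : SimpleGraph V} (hG : HasAtMostOneNegSquare (seidelForm G))
    {v a b c d : V} (hv : G.IsIsolated v) (hab : G.Adj a b) (hcd : G.Adj c d) :
    G.Adj a c ∨ G.Adj b c := by
  classical
  have isNegativePair {x y : V} (hxy : G.Adj x y) :
      IsNegativePair (seidelForm G) (Pi.single v 1) (Pi.single x 1) (Pi.single y 1) := by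
    constructor <;> simp [seidelForm_single, hv _, hxy]
  have eq_one_or (x y : V) : seidelForm G (Pi.single x 1) (Pi.single y 1) = 1 ∨
      seidelForm G (Pi.single x 1) (Pi.single y 1) = -1 := by
    rw [seidelForm_single]
    exact (ite_eq_or_eq _ _ _).symm
  by_contra! h
  exact (isNegativePair hab).false_of_eq_one hG (isSymm_seidelForm G) (by simp [seidelForm_single])
    (isNegativePair hcd) (by simp [seidelForm_single, h.1]) (by simp [seidelForm_single, h.2])
    (eq_one_or a d) (eq_one_or b d)

theorem isCompleteMultipartite_switch_isIsolated {V : Type*} {G : SimpleGraph V}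
    (h : ∀ ⦃a b c d⦄, G.Adj a b → G.Adj c d → G.Adj a c ∨ G.Adj b c) :
    (switch G {v | G.IsIsolated v}).IsCompleteMultipartite where
  trans x y z hxy hyz hxz := by
    simp only [switch, Set.mem_ofPred_eq] at hxy hyz hxz
    by_cases hy : G.IsIsolated y
    · have hx : G.IsIsolated x := by simpa [hy, G.adj_comm x, hy x, xor_def] using hxy
      have hz : G.IsIsolated z := by simpa [hy, hy z, xor_def] using hyz
      simp [hx, hz, hx z] at hxz
    · obtain ⟨w, hw⟩ : ∃ w, G.Adj y w := by simpa [IsIsolated] using hy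
      have hx : ¬G.IsIsolated x := fun hx => hxy (by simp [hx, hy, hx y])
      have hz : ¬G.IsIsolated z := fun hz => hyz (by simp [hz, hy, G.adj_comm y, hz y])
      simp only [hx, hy, hz, xor_def, not_false_eq_true, and_true, false_and,
        or_false] at hxy hyz hxz
      exact (h hxz hw).elim hxy fun hzy => hyz hzy.symm

theorem exists_switchingEquiv_isCompleteMultipartite {G : SimpleGraph V}
    (hG : HasAtMostOneNegSquare (seidelForm G)) :
    ∃ H, SwitchingEquiv G H ∧ H.IsCompleteMultipartite := by
  obtain h | ⟨⟨v⟩⟩ := isEmpty_or_nonempty V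
  · exact ⟨switch G ∅, switchingEquiv_switch G ∅, ⟨fun x => isEmptyElim x⟩⟩
  · have hv : (switch G (G.neighborSet v)).IsIsolated v := fun w => by simp [switch]
    have hsw := switchingEquiv_switch G (G.neighborSet v)
    refine ⟨_, hsw.trans (switchingEquiv_switch _ _), isCompleteMultipartite_switch_isIsolated ?_⟩
    exact fun a b c d => adj_or_adj_of_isIsolated (hsw.hasAtMostOneNegSquare hG) hv

end Switching

section CompleteMultipartite

/-- The polynomial with constant coefficient `1` whose reciprocal roots are the `w i`. -/
noncomputable def reciprocalPoly {ι R : Type*} [Fintype ι] [CommRing R] (w : ι → R) : R[X] :=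
  ∏ i, (1 - C (w i) * X)

variable {R ι : Type*} [Fintype ι] [DecidableEq ι] [CommRing R]

theorem det_diagonal_add_vecMulVec_of_field {K : Type*} [Field K] {d : ι → K} (hd : ∀ i, d i ≠ 0)
    (u v : ι → K) :
    (diagonal d + vecMulVec u v).det = ∏ i, d i + ∑ i, u i * v i * ∏ j ∈ univ.erase i, d j := by
  have hfactor : diagonal d + vecMulVec u v =
      diagonal d * (1 + replicateCol Unit (fun i => u i / d i) * replicateRow Unit v) := by
    rw [← vecMulVec_eq, Matrix.mul_add, Matrix.mul_one, mul_vecMulVec]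
    congr 2
    ext i
    rw [mulVec_diagonal, mul_div_cancel₀ _ (hd i)]
  rw [hfactor, det_mul, det_diagonal, det_one_add_replicateCol_mul_replicateRow, mul_add, mul_one,
    dotProduct, mul_sum]
  congr 1
  refine sum_congr rfl fun i _ => ?_
  rw [← mul_prod_erase univ d (mem_univ i)]
  have := hd i
  field

theorem det_diagonal_add_vecMulVec [IsDomain R] {d : ι → R} (hd : ∀ i, d i ≠ 0) (u v : ι → R) :
    (diagonal d + vecMulVec u v).det = ∏ i, d i + ∑ i, u i * v i * ∏ j ∈ univ.erase i, d j := by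
  have hinj := IsFractionRing.injective R (FractionRing R)
  apply hinj
  have hmap : (algebraMap R (FractionRing R)).mapMatrix (diagonal d + vecMulVec u v) =
      diagonal (algebraMap R _ ∘ d) + vecMulVec (algebraMap R _ ∘ u) (algebraMap R _ ∘ v) := by
    ext i j
    simp [vecMulVec_apply, diagonal_apply, apply_ite]
  rw [RingHom.map_det, hmap, det_diagonal_add_vecMulVec_of_field]
  · simp
  · exact fun i => (map_ne_zero_iff _ hinj).2 (hd i)

theorem charpolyRev_mul_comm {m n : Type*} [Fintype m] [DecidableEq m] [Fintype n] [DecidableEq n]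
    (A : Matrix m n R) (B : Matrix n m R) : (A * B).charpolyRev = (B * A).charpolyRev := by
  rw [charpolyRev, charpolyRev, Matrix.map_mul, Matrix.map_mul, ← Matrix.smul_mul,
    det_one_sub_mul_comm, Matrix.mul_smul]

theorem derivative_reciprocalPoly (w : ι → R) : derivative (reciprocalPoly w) =
    -∑ i, C (w i) * ∏ j ∈ univ.erase i, (1 - C (w j) * X) := by
  rw [reciprocalPoly, derivative_prod_finset, ← sum_neg_distrib]
  refine sum_congr rfl fun i _ => ?_
  rw [derivative_sub, derivative_one, derivative_C_mul_X]
  ring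

theorem charpolyRev_diagonal_sub_vecMulVec [IsDomain R] (w u v : ι → R) :
    (diagonal w - vecMulVec u v).charpolyRev =
      reciprocalPoly w + X * ∑ i, C (u i * v i) * ∏ j ∈ univ.erase i, (1 - C (w j) * X) := by
  have hd (i : ι) : (1 - C (w i) * X : R[X]) ≠ 0 := fun h => by
    simpa using congrArg (eval 0) h
  have hmatrix : 1 - (X : R[X]) • (diagonal w - vecMulVec u v).map C =
      diagonal (fun i => 1 - C (w i) * X) + vecMulVec (fun i => X * C (u i)) fun i => C (v i) := by
    ext1 i j
    obtain rfl | hij := eq_or_ne i j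
    · simp [vecMulVec_apply]
      ring
    · simp only [Matrix.sub_apply, Matrix.add_apply, Matrix.smul_apply, Matrix.map_apply,
        diagonal_apply_ne _ hij, one_apply_ne hij, vecMulVec_apply, smul_eq_mul, zero_sub, C_mul,
        C_neg]
      ring
  rw [charpolyRev, hmatrix, det_diagonal_add_vecMulVec hd, mul_sum, reciprocalPoly]
  simp only [C_mul, mul_assoc]

/-- The incidence matrix of the partition of `Σ i, V i` into the parts `V i`. -/
def partIncidence (R : Type*) [Zero R] [One R] (V : ι → Type*) : Matrix (Σ i, V i) ι R :=
  of fun a i => if a.1 = i then 1 else 0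

variable {V : ι → Type*}

theorem partIncidence_mul_mul_transpose (M : Matrix ι ι R) :
    partIncidence R V * M * (partIncidence R V)ᵀ = M.submatrix Sigma.fst Sigma.fst := by
  ext a b
  simp [partIncidence, mul_apply]

variable [∀ i, Fintype (V i)]

theorem partIncidence_transpose_mul_self :
    (partIncidence R V)ᵀ * partIncidence R V = diagonal fun i => (Fintype.card (V i) : R) := by
  ext i j
  obtain rfl | hij := eq_or_ne i j
  · simp [partIncidence, mul_apply, Fintype.sum_sigma]
  · rw [diagonal_apply_ne _ hij, mul_apply]
    refine sum_eq_zero fun a _ => ?_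
    simp only [partIncidence, transpose_apply, of_apply, mul_ite, mul_one, mul_zero]
    grind

variable (V) [∀ i, DecidableEq (V i)]

theorem seidelMatrix_completeMultipartiteGraph_add_one :
    seidelMatrix (completeMultipartiteGraph V) + 1 = partIncidence ℝ V *
      (diagonal (fun _ => 2) - vecMulVec 1 1 : Matrix ι ι ℝ) * (partIncidence ℝ V)ᵀ := by
  classical
  rw [partIncidence_mul_mul_transpose]
  ext a b
  rw [seidelMatrix_add_one_apply]
  obtain hab | hab := eq_or_ne a.1 b.1 <;> simp [hab]
  norm_num

theorem two_mul_charpolyRev_seidelMatrix_completeMultipartiteGraph :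
    2 * (seidelMatrix (completeMultipartiteGraph V) + 1).charpolyRev =
      2 * reciprocalPoly (fun i => 2 * (Fintype.card (V i) : ℝ)) -
        X * derivative (reciprocalPoly fun i => 2 * (Fintype.card (V i) : ℝ)) := by
  have hmul : diagonal (fun i => (Fintype.card (V i) : ℝ)) *
      (diagonal (fun _ => 2) - vecMulVec 1 1) =
      diagonal (fun i => 2 * (Fintype.card (V i) : ℝ)) -
        vecMulVec (fun i => (Fintype.card (V i) : ℝ)) 1 := by
    rw [Matrix.mul_sub, diagonal_mul_diagonal, mul_vecMulVec]
    congr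
    · funext i
      ring
    · funext i
      simp [mulVec_diagonal]
  rw [seidelMatrix_completeMultipartiteGraph_add_one, charpolyRev_mul_comm, ← Matrix.mul_assoc,
    partIncidence_transpose_mul_self, hmul, charpolyRev_diagonal_sub_vecMulVec,
    derivative_reciprocalPoly, mul_neg, sub_neg_eq_add, mul_add, mul_sum, mul_sum, mul_sum]
  congr 1
  refine sum_congr rfl fun i _ => ?_
  simp only [Pi.one_apply, mul_one, C_mul, C_ofNat]
  ring

theorem hasAtMostOneNegSquare_diagonal_sub_vecMulVec :
    HasAtMostOneNegSquare (toBilin' (diagonal (fun _ => 2) - vecMulVec 1 1 : Matrix ι ι ℝ)) := by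
  refine ⟨∑ i, LinearMap.proj i, fun x hx => ?_⟩
  have hsum : ∑ i, x i = 0 := by simpa using hx
  have hx : toBilin' (diagonal (fun _ => 2) - vecMulVec 1 1 : Matrix ι ι ℝ) x x =
      2 * ∑ i, x i ^ 2 - (∑ i, x i) ^ 2 := by
    rw [toBilin'_apply', sub_mulVec, vecMulVec_mulVec, dotProduct_sub, sq (∑ i, x i), sum_mul_sum]
    simp only [dotProduct, mulVec_diagonal, Pi.one_apply, one_mul, Pi.smul_apply, op_smul_eq_mul,
      mul_sum]
    congr 1
    exact sum_congr rfl fun i _ => by ring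
  rw [hx, hsum]
  simp [sum_nonneg, sq_nonneg]

theorem hasAtMostOneNegSquare_seidelForm_completeMultipartiteGraph :
    HasAtMostOneNegSquare (seidelForm (completeMultipartiteGraph V)) := by
  rw [seidelForm, seidelMatrix_completeMultipartiteGraph_add_one]
  have := (hasAtMostOneNegSquare_diagonal_sub_vecMulVec (ι := ι)).comp
    (partIncidence ℝ V)ᵀ.toLin'
  rwa [toBilin'_comp, transpose_transpose] at this

end CompleteMultipartite

section Cospectral

theorem exists_conjStarAlgAut_eq_of_charpoly_eq {𝕜 n : Type*} [RCLike 𝕜] [Fintype n]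
    [DecidableEq n] {A B : Matrix n n 𝕜} (hA : A.IsHermitian) (hB : B.IsHermitian)
    (h : B.charpoly = A.charpoly) :
    ∃ U : unitaryGroup n 𝕜, B = Unitary.conjStarAlgAut 𝕜 _ U A := by
  have heigen : hB.eigenvalues = hA.eigenvalues := (hB.eigenvalues_eq_eigenvalues_iff hA).2 h
  refine ⟨hB.eigenvectorUnitary * star hA.eigenvectorUnitary, ?_⟩
  rw [Unitary.conjStarAlgAut_mul_apply, hA.conjStarAlgAut_star_eigenvectorUnitary, ← heigen]
  exact hB.spectral_theorem

theorem exists_eq_conjTranspose_mul_mul_of_charpoly_eq {𝕜 m n : Type*} [RCLike 𝕜] [Fintype m]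
    [DecidableEq m] [Fintype n] [DecidableEq n] {A : Matrix m m 𝕜} {B : Matrix n n 𝕜}
    (hA : A.IsHermitian) (hB : B.IsHermitian) (h : B.charpoly = A.charpoly) :
    ∃ U : Matrix m n 𝕜, B = Uᴴ * A * U := by
  have hcard : Fintype.card n = Fintype.card m := by
    rw [← B.charpoly_natDegree_eq_dim, h, A.charpoly_natDegree_eq_dim]
  let e : n ≃ m := Fintype.equivOfCardEq hcard
  obtain ⟨U, hU⟩ := exists_conjStarAlgAut_eq_of_charpoly_eq hA (hB.submatrix e.symm)
    (by rw [← h]; exact charpoly_reindex e B)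
  rw [Unitary.conjStarAlgAut_apply] at hU
  refine ⟨(star (U : Matrix m m 𝕜)).submatrix id e, ?_⟩
  calc
    B = (B.submatrix e.symm e.symm).submatrix e e := by simp
    _ = _ := by
      rw [hU, submatrix_mul _ _ e id e Function.bijective_id,
        submatrix_mul _ _ e id id Function.bijective_id, submatrix_id_id,
        conjTranspose_submatrix, ← star_eq_conjTranspose, star_star]

theorem HasAtMostOneNegSquare.seidelForm_of_charpoly_eq {V W : Type*} [Fintype V]
    [DecidableEq V] [Fintype W] [DecidableEq W] {G : SimpleGraph V} {H : SimpleGraph W}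
    (hG : HasAtMostOneNegSquare (seidelForm G))
    (h : (seidelMatrix H).charpoly = (seidelMatrix G).charpoly) :
    HasAtMostOneNegSquare (seidelForm H) := by
  obtain ⟨U, hU⟩ := exists_eq_conjTranspose_mul_mul_of_charpoly_eq
    (isHermitian_seidelMatrix_add_one G) (isHermitian_seidelMatrix_add_one H)
    (by simp only [charpoly_seidelMatrix_add_one, h])
  have hform : seidelForm H = (seidelForm G).comp U.toLin' U.toLin' := by
    rw [seidelForm, seidelForm, toBilin'_comp, hU, conjTranspose_eq_transpose_of_trivial]
  exact hform ▸ hG.comp _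

end Cospectral

section ReciprocalRoots

theorem eq_C_mul_X_pow_of_X_mul_derivative_eq {R : Type*} [CommRing R] [NoZeroDivisors R]
    [CharZero R] {p : R[X]} {n : ℕ} (h : X * derivative p = (n : R[X]) * p) :
    p = C (p.coeff n) * X ^ n := by
  have hcoeff (k : ℕ) : (k : R) * p.coeff k = n * p.coeff k := by
    calc
      (k : R) * p.coeff k = (X * derivative p).coeff k := by
        cases k with
        | zero => simp
        | succ k => rw [coeff_X_mul, coeff_derivative, Nat.cast_succ, mul_comm]
      _ = n * p.coeff k := by rw [h, coeff_natCast_mul]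
  ext k
  rw [coeff_C_mul_X_pow]
  split_ifs with hk
  · rw [hk]
  · exact (mul_eq_mul_right_iff.1 (hcoeff k)).resolve_left (Nat.cast_injective.ne hk)

theorem exists_equiv_of_map_univ_eq {ι κ α : Type*} [Fintype ι] [Fintype κ] {f : ι → α}
    {g : κ → α} (h : univ.val.map f = univ.val.map g) : ∃ e : ι ≃ κ, ∀ i, g (e i) = f i := by
  classical
  have hcard (a : α) : Fintype.card {i // f i = a} = Fintype.card {j // g j = a} := by
    simpa [Multiset.count_map, Fintype.card_subtype, card_def, eq_comm] using
      congrArg (Multiset.count a) h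
  exact ⟨Equiv.ofFiberEquiv fun a => Fintype.equivOfCardEq (hcard a), Equiv.ofFiberEquiv_map _⟩

variable {ι κ : Type*} [Fintype ι] [Fintype κ]

theorem eval_reciprocalPoly {R : Type*} [CommRing R] (w : ι → R) (x : R) :
    (reciprocalPoly w).eval x = ∏ i, (1 - w i * x) := by
  simp [reciprocalPoly, eval_prod]

section Field

variable {K : Type*} [Field K] {w : ι → K} {w' : κ → K}

theorem eval_inv_reciprocalPoly {i : ι} (hi : w i ≠ 0) : (reciprocalPoly w).eval (w i)⁻¹ = 0 := by
  rw [eval_reciprocalPoly]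
  exact prod_eq_zero (mem_univ i) (by rw [mul_inv_cancel₀ hi, sub_self])

theorem prod_one_sub_div_eq_of_reciprocalPoly_sub_eq {c : K} {n : ℕ}
    (h : reciprocalPoly w' - reciprocalPoly w = C c * X ^ n) {i : ι} (hi : w i ≠ 0) :
    ∏ j, (1 - w' j / w i) = c / w i ^ n := by
  have heval := congrArg (eval (w i)⁻¹) h
  rw [eval_sub, eval_inv_reciprocalPoly hi, sub_zero, eval_reciprocalPoly, eval_C_mul, eval_X_pow,
    inv_pow] at heval
  simpa only [div_eq_mul_inv] using heval

theorem roots_reciprocalPoly (hw : ∀ i, w i ≠ 0) :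
    (reciprocalPoly w).roots = univ.val.map fun i => (w i)⁻¹ := by
  have hfactor : reciprocalPoly w = C (∏ i, -w i) * ∏ i, (X - C (w i)⁻¹) := by
    rw [reciprocalPoly, map_prod, ← prod_mul_distrib]
    refine prod_congr rfl fun i _ => ?_
    rw [mul_sub, ← C_mul, neg_mul, mul_inv_cancel₀ (hw i), C_neg, C_neg, C_1]
    ring
  have hne : ∏ i, -w i ≠ 0 := prod_ne_zero_iff.2 fun i _ => neg_ne_zero.2 (hw i)
  rw [hfactor, roots_C_mul _ hne, ← roots_multiset_prod_X_sub_C (univ.val.map _), Multiset.map_map]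
  rfl

theorem exists_equiv_of_reciprocalPoly_eq (hw : ∀ i, w i ≠ 0) (hw' : ∀ j, w' j ≠ 0)
    (h : reciprocalPoly w = reciprocalPoly w') : ∃ e : ι ≃ κ, ∀ i, w' (e i) = w i := by
  have hroots := congrArg roots h
  rw [roots_reciprocalPoly hw, roots_reciprocalPoly hw'] at hroots
  obtain ⟨e, he⟩ := exists_equiv_of_map_univ_eq hroots
  exact ⟨e, fun i => inv_injective (he i)⟩

end Field

theorem card_eq_one_of_prod_eq_quarter {f : ι → ℝ} (hpos : ∀ i, 0 < f i) (hlt : ∀ i, f i < 1 / 2)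
    (h : ∏ i, f i = 1 / 4) : Fintype.card ι = 1 := by
  obtain hι | hι := isEmpty_or_nonempty ι
  · norm_num at h
  · refine le_antisymm (not_lt.1 fun hcard => h.not_lt ?_) Fintype.card_pos
    calc
      ∏ i, f i < ∏ _i : ι, (1 / 2 : ℝ) :=
        prod_lt_prod_of_nonempty (fun i _ => hpos i) (fun i _ => hlt i) univ_nonempty
      _ = (1 / 2) ^ Fintype.card ι := by simp
      _ ≤ (1 / 2) ^ 2 := pow_le_pow_of_le_one (by norm_num) (by norm_num) hcard
      _ = 1 / 4 := by norm_num

theorem prod_one_sub_eq_zero {q : ι → ℕ} (hq : ∀ i, 0 < q i) (hsum : ∑ i, q i ≠ 3)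
    (h : ∏ i, (1 - (q i : ℝ)) = 4 * ∏ i, (1 - (q i : ℝ) / 2)) : ∏ i, (1 - (q i : ℝ)) = 0 := by
  by_contra hne
  have hq1 (i : ι) : 1 - (q i : ℝ) ≠ 0 := by simpa using prod_ne_zero_iff.1 hne i (mem_univ i)
  have hq2 (i : ι) : 1 - (q i : ℝ) / 2 ≠ 0 :=
    prod_ne_zero_iff.1 (right_ne_zero_of_mul (h ▸ hne)) i (mem_univ i)
  have hq3 (i : ι) : 3 ≤ q i := by
    have h1 : q i ≠ 1 := fun h => hq1 i (by simp [h])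
    have h2 : q i ≠ 2 := fun h => hq2 i (by simp [h])
    have := hq i
    omega
  let f : ι → ℝ := fun i => (1 - (q i : ℝ) / 2) / (1 - q i)
  have hprod : ∏ i, f i = 1 / 4 := by
    rw [prod_div_distrib, h]
    have : ∏ i, (1 - (q i : ℝ) / 2) ≠ 0 := prod_ne_zero_iff.2 fun i _ => hq2 i
    field
  have hpos (i : ι) : 0 < f i := by
    have : (3 : ℝ) ≤ q i := by exact_mod_cast hq3 i
    exact div_pos_of_neg_of_neg (by linarith) (by linarith)
  have hlt (i : ι) : f i < 1 / 2 := by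
    have : (3 : ℝ) ≤ q i := by exact_mod_cast hq3 i
    rw [div_lt_iff_of_neg (by linarith)]
    linarith
  obtain ⟨_⟩ := Fintype.card_eq_one_iff_nonempty_unique.1 <|
    card_eq_one_of_prod_eq_quarter hpos hlt hprod
  rw [Fintype.prod_unique] at hprod
  rw [Fintype.sum_unique] at hsum
  refine hsum ?_
  rw [div_eq_div_iff (hq1 _) (by norm_num)] at hprod
  have : (q default : ℝ) = 3 := by linarith
  exact_mod_cast this

theorem exists_equiv_of_two_mul_reciprocalPoly_sub_X_mul_derivative_eq {p : ι → ℕ} {q : κ → ℕ}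
    (hp : ∀ i, 0 < p i) (hq : ∀ j, 0 < q j) (hsum : ∑ j, q j ≠ 3) {i₁ i₂ : ι} (h₁ : p i₁ = 1)
    (h₂ : p i₂ = 2)
    (h : 2 * reciprocalPoly (fun i => 2 * (p i : ℝ)) -
          X * derivative (reciprocalPoly fun i => 2 * (p i : ℝ)) =
        2 * reciprocalPoly (fun j => 2 * (q j : ℝ)) -
          X * derivative (reciprocalPoly fun j => 2 * (q j : ℝ))) :
    ∃ e : ι ≃ κ, ∀ i, q (e i) = p i := by
  have hp' (i : ι) : 2 * (p i : ℝ) ≠ 0 := by simpa using (hp i).ne'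
  have hq' (j : κ) : 2 * (q j : ℝ) ≠ 0 := by simpa using (hq j).ne'
  set P := reciprocalPoly fun i => 2 * (p i : ℝ)
  set Q := reciprocalPoly fun j => 2 * (q j : ℝ)
  obtain ⟨c, hc⟩ : ∃ c, Q - P = C c * X ^ 2 := by
    refine ⟨_, eq_C_mul_X_pow_of_X_mul_derivative_eq (n := 2) ?_⟩
    rw [derivative_sub, Nat.cast_ofNat]
    linear_combination h
  have hprod (i : ι) : ∏ j, (1 - (q j : ℝ) / p i) = c / (2 * p i) ^ 2 := by
    simpa only [mul_div_mul_left _ _ (two_ne_zero' ℝ)] using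
      prod_one_sub_div_eq_of_reciprocalPoly_sub_eq hc (hp' i)
  have hprod₁ : ∏ j, (1 - (q j : ℝ)) = c / 4 := by
    have := hprod i₁
    rw [h₁] at this
    norm_num at this
    exact this
  have hprod₂ : ∏ j, (1 - (q j : ℝ) / 2) = c / 16 := by
    have := hprod i₂
    rw [h₂] at this
    norm_num at this
    exact this
  have hc₀ : c = 0 := by
    have := prod_one_sub_eq_zero hq hsum (by rw [hprod₁, hprod₂]; ring)
    linarith
  have hPQ : P = Q := (sub_eq_zero.1 (by rw [hc, hc₀, C_0, zero_mul])).symm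
  obtain ⟨e, he⟩ := exists_equiv_of_reciprocalPoly_eq hp' hq' hPQ
  exact ⟨e, fun i => by simpa using he i⟩

end ReciprocalRoots

section SDetermined

variable {ι κ : Type*} {V : ι → Type*} {V' : κ → Type*}

theorem nonempty_completeMultipartiteGraph_iso [∀ i, Fintype (V i)] [∀ j, Fintype (V' j)]
    (e : ι ≃ κ) (h : ∀ i, Fintype.card (V' (e i)) = Fintype.card (V i)) :
    Nonempty (completeMultipartiteGraph V ≃g completeMultipartiteGraph V') :=
  ⟨⟨e.sigmaCongr fun i => Fintype.equivOfCardEq (h i).symm, not_congr e.apply_eq_iff_eq⟩⟩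

variable [Fintype ι] [DecidableEq ι] [∀ i, Fintype (V i)] [∀ i, DecidableEq (V i)]
  [∀ i, Nonempty (V i)] [Fintype κ] [DecidableEq κ] [∀ j, Fintype (V' j)] [∀ j, DecidableEq (V' j)]
  [∀ j, Nonempty (V' j)]

theorem nonempty_completeMultipartiteGraph_iso_of_charpoly_eq
    (hcard : Fintype.card (Σ i, V i) ≠ 3) {i₁ i₂ : ι} (h₁ : Fintype.card (V i₁) = 1)
    (h₂ : Fintype.card (V i₂) = 2)
    (h : (seidelMatrix (completeMultipartiteGraph V)).charpoly =
      (seidelMatrix (completeMultipartiteGraph V')).charpoly) :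
    Nonempty (completeMultipartiteGraph V ≃g completeMultipartiteGraph V') := by
  have hrev : (seidelMatrix (completeMultipartiteGraph V) + 1).charpolyRev =
      (seidelMatrix (completeMultipartiteGraph V') + 1).charpolyRev := by
    simp only [← reverse_charpoly, charpoly_seidelMatrix_add_one, h]
  have hcard' : ∑ j, Fintype.card (V' j) ≠ 3 := by
    rwa [← Fintype.card_sigma,
      ← (seidelMatrix (completeMultipartiteGraph V')).charpoly_natDegree_eq_dim, ← h,
      charpoly_natDegree_eq_dim]
  obtain ⟨e, he⟩ := exists_equiv_of_two_mul_reciprocalPoly_sub_X_mul_derivative_eq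
    (fun i => Fintype.card_pos (α := V i)) (fun j => Fintype.card_pos (α := V' j)) hcard' h₁ h₂
    (by simp only [← two_mul_charpolyRev_seidelMatrix_completeMultipartiteGraph, hrev])
  exact nonempty_completeMultipartiteGraph_iso e he

theorem sDetermined_append_two_two_one_general {J : Type} [Fintype J] [DecidableEq J]
    {V : J → Type} [∀ j, Fintype (V j)] [∀ j, DecidableEq (V j)] [∀ j, Nonempty (V j)]
    (hcard : Fintype.card (Σ j, V j) ≠ 3) {j₁ j₂ : J} (h₁ : Fintype.card (V j₁) = 1)
    (h₂ : Fintype.card (V j₂) = 2) : SDetermined (completeMultipartiteGraph V) := by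
  classical
  intro W _ _ H hH
  have hG := hasAtMostOneNegSquare_seidelForm_completeMultipartiteGraph V
  obtain ⟨H', hs, hH'⟩ :=
    exists_switchingEquiv_isCompleteMultipartite (hG.seidelForm_of_charpoly_eq hH)
  have (c : Quotient hH'.setoid) : Nonempty {x // hH'.setoid.r c.out x} :=
    ⟨_, hH'.setoid.refl _⟩
  obtain ⟨g⟩ := nonempty_completeMultipartiteGraph_iso_of_charpoly_eq
    (V' := fun c : Quotient hH'.setoid => {x // hH'.setoid.r c.out x}) hcard h₁ h₂
    (by rw [← hH, ← hs.charpoly_seidelMatrix_eq, charpoly_seidelMatrix_eq_of_iso hH'.iso])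
  exact ⟨H', hs, ⟨hH'.iso.trans g.symm⟩⟩

end SDetermined

/-- **Example.** For `n_1 ≥ ⋯ ≥ n_{k-3} ≥ 2` (here `k - 3 = m ≥ 1`, i.e. `k ≥ 4`),
the complete `k`-partite graph `K_{n_1,…,n_{k-3},2,2,1}`, whose parts are the `n i`
together with two further parts of size `2` and one of size `1`, is determined,
up to switching, by its Seidel spectrum. -/
theorem sDetermined_append_two_two_one (m : ℕ) (hm : 1 ≤ m) (n : Fin m → ℕ)
    (hna : Antitone n) (hn : ∀ i, 2 ≤ n i) :
    SDetermined (completeMultipartiteGraph fun i : Fin (m + 3) =>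
      Fin (if h : (i : ℕ) < m then n ⟨i, h⟩
        else if (i : ℕ) = m then 2 else if (i : ℕ) = m + 1 then 2 else 1)) := by
  have (i : Fin (m + 3)) : Nonempty (Fin (if h : (i : ℕ) < m then n ⟨i, h⟩
      else if (i : ℕ) = m then 2 else if (i : ℕ) = m + 1 then 2 else 1)) := by
    rw [← Fin.pos_iff_nonempty]
    split_ifs with h
    · exact two_pos.trans_le (hn _)
    all_goals norm_num
  refine sDetermined_append_two_two_one_general ?_ (j₁ := ⟨m + 2, by omega⟩) (j₂ := ⟨m, by omega⟩)
    (by simp) (by simp)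
  rw [Fintype.card_sigma, Fin.sum_univ_castSucc, Fin.sum_univ_castSucc, Fin.sum_univ_castSucc]
  simp
end
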